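/- Let T be a clique-separator decomposition of a finite simple graph G. Then tw(G) is the maximum of tw(A), where A ranges over all the atoms of T (the subgraphs of G induced by the bags of T). -/

import Mathlib

/-- A tree-decomposition of a graph `G` indexed by nodes of type `ι`. -/
structure TreeDecomp {V : Type} (G : SimpleGraph V) (ι : Type) where
  tree : SimpleGraph ι
  isTree : tree.IsTree
  bag : ι → Finset V
  bags_cover : ∀ v : V, ∃ i : ι, v ∈ bag i
  edges_covered : ∀ ⦃u v : V⦄, G.Adj u v → ∃ i : ι, u ∈ bag i ∧ v ∈ bag i
  bags_connected : ∀ v : V, (tree.induce {i : ι | v ∈ bag i}).Connected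

/-- The treewidth of `G`: the smallest `k` such that `G` has a tree-decomposition
all of whose bags have at most `k + 1` vertices (i.e. of width at most `k`). -/
noncomputable def treewidth {V : Type} (G : SimpleGraph V) : ℕ :=
  sInf { k : ℕ | ∃ (ι : Type) (td : TreeDecomp G ι), ∀ i : ι, (td.bag i).card ≤ k + 1 }

/-- The neighborhood `N_G(C)` of a vertex set `C`. -/
def nbhd {V : Type} (G : SimpleGraph V) (C : Set V) : Set V :=
  {v : V | v ∉ C ∧ ∃ u ∈ C, G.Adj u v}

/-- `S` separates `a` from `b` in `G`: `a, b ∉ S` and every walk from `a` to `b` meets `S`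
(so `a` and `b` lie in distinct components of `G` minus `S`). -/
def Separates {V : Type} (G : SimpleGraph V) (S : Set V) (a b : V) : Prop :=
  a ∉ S ∧ b ∉ S ∧ ∀ p : G.Walk a b, ∃ v ∈ p.support, v ∈ S

/-- `C` is a connected component of `G` minus `S`. -/
def IsCompOf {V : Type} (G : SimpleGraph V) (S : Set V) (C : Set V) : Prop :=
  C.Nonempty ∧ Disjoint C S ∧ (G.induce C).Connected ∧
    ∀ D : Set V, C ⊆ D → Disjoint D S → (G.induce D).Connected → D = C

/-- `S` is a separator of `G`: `G` minus `S` has more than one connected component. -/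
def IsSeparator {V : Type} (G : SimpleGraph V) (S : Set V) : Prop :=
  ∃ C D : Set V, IsCompOf G S C ∧ IsCompOf G S D ∧ C ≠ D

/-- `C` is a full component of `S` in `G`. -/
def IsFullCompOf {V : Type} (G : SimpleGraph V) (S : Set V) (C : Set V) : Prop :=
  IsCompOf G S C ∧ nbhd G C = S

/-- `S` is a minimal separator of `G`: it has at least two full components. -/
def IsMinSep {V : Type} (G : SimpleGraph V) (S : Set V) : Prop :=
  ∃ C D : Set V, IsFullCompOf G S C ∧ IsFullCompOf G S D ∧ C ≠ D

/-- `R` crosses `S` if `R` separates some pair of vertices of `S`. -/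
def Crosses {V : Type} (G : SimpleGraph V) (R S : Set V) : Prop :=
  ∃ a b : V, a ∈ S ∧ b ∈ S ∧ Separates G R a b

/-- `G` is chordal: every cycle with more than 3 vertices has a chord. -/
def IsChordal {V : Type} (G : SimpleGraph V) : Prop :=
  ∀ ⦃v : V⦄ (c : G.Walk v v), c.IsCycle → 3 < c.length →
    ∃ u w : V, u ∈ c.support ∧ w ∈ c.support ∧ G.Adj u w ∧ s(u, w) ∉ c.edges

/-- `H` is a triangulation of `G`. -/
def IsTriangulationOf {V : Type} (H G : SimpleGraph V) : Prop :=
  IsChordal H ∧ G ≤ H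

/-- `H` is a minimal triangulation of `G`. -/
def IsMinimalTriangulationOf {V : Type} (H G : SimpleGraph V) : Prop :=
  IsTriangulationOf H G ∧ ∀ H' : SimpleGraph V, IsTriangulationOf H' G → H' ≤ H → H' = H

/-- `K(S)`: the graph on the same vertex type whose edges join all pairs of
distinct vertices of `S`. -/
def completeOn {V : Type} (S : Set V) : SimpleGraph V :=
  SimpleGraph.fromRel (fun a b => a ∈ S ∧ b ∈ S)

/-- `s` is a maximal clique of `G`. -/
def IsMaximalClique {V : Type} (G : SimpleGraph V) (s : Set V) : Prop :=
  G.IsClique s ∧ ∀ t : Set V, G.IsClique t → s ⊆ t → s = t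

/-- `fill G td`: fill every bag of the tree-decomposition `td` into a clique. -/
def fill {V ι : Type} (G : SimpleGraph V) (td : TreeDecomp G ι) : SimpleGraph V :=
  G ⊔ SimpleGraph.fromRel (fun a b => ∃ i : ι, a ∈ td.bag i ∧ b ∈ td.bag i)

/-- The nodes of the maximal subtree `T(i,j)` of the tree containing `i` but not `j`
(for adjacent `i`, `j`): the nodes reachable from `i` after deleting the edge `{i, j}`. -/
def sideNodes {V ι : Type} {G : SimpleGraph V} (td : TreeDecomp G ι) (i j : ι) : Set ι :=
  {t : ι | (td.tree.deleteEdges {s(i, j)}).Reachable i t}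

/-- `V(i,j)`: the union of the bags of nodes in `T(i,j)`, with the vertices of the
bag of `j` removed. -/
def sideVerts {V ι : Type} {G : SimpleGraph V} (td : TreeDecomp G ι) (i j : ι) : Set V :=
  (⋃ t ∈ sideNodes td i j, (td.bag t : Set V)) \ (td.bag j : Set V)

/-- A perfect elimination order of `G`. -/
def IsPerfectElimOrder {V : Type} [Fintype V] (G : SimpleGraph V)
    (e : Fin (Fintype.card V) ≃ V) : Prop :=
  ∀ i : Fin (Fintype.card V),
    G.IsClique {u : V | G.Adj (e i) u ∧ ∃ j : Fin (Fintype.card V), i < j ∧ e j = u}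

/-- `H` is a minor of `G`, via the branch-set (minor model) characterization. -/
def IsMinorOf {W V : Type} (H : SimpleGraph W) (G : SimpleGraph V) : Prop :=
  ∃ B : W → Set V,
    (∀ w : W, (B w).Nonempty) ∧
    (∀ w : W, (G.induce (B w)).Connected) ∧
    (Pairwise fun w₁ w₂ : W => Disjoint (B w₁) (B w₂)) ∧
    ∀ ⦃w₁ w₂ : W⦄, H.Adj w₁ w₂ → ∃ a ∈ B w₁, ∃ b ∈ B w₂, G.Adj a b

/-- There is a clique minor of `G` minus `C` rooted on `R`, given by branch sets
`B v ∋ v` for `v ∈ R`: disjoint from `C`, pairwise disjoint, each connected, with an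
edge of `G` between every two of them. -/
def HasCliqueMinorRootedAvoiding {V : Type} (G : SimpleGraph V) (R C : Set V) : Prop :=
  ∃ B : R → Set V,
    (∀ v : R, (v : V) ∈ B v) ∧
    (∀ v : R, Disjoint (B v) C) ∧
    (∀ v : R, (G.induce (B v)).Connected) ∧
    (∀ u v : R, u ≠ v → Disjoint (B u) (B v)) ∧
    (∀ u v : R, u ≠ v → ∃ a ∈ B u, ∃ b ∈ B v, G.Adj a b)

/-- `S` is a minor-safe separator of `G`: for every component `C` of `G` minus `S`,
there is a clique minor of `G` minus `C` rooted on `N_G(C)`. -/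
def MinorSafe {V : Type} (G : SimpleGraph V) (S : Set V) : Prop :=
  ∀ C : Set V, IsCompOf G S C → HasCliqueMinorRootedAvoiding G (nbhd G C) C

namespace SimpleGraph

variable {V W : Type*}

/-- A map sending adjacent vertices to mutually reachable vertices preserves reachability. -/
theorem Reachable.of_adj_imp_reachable {G : SimpleGraph V} {H : SimpleGraph W} (f : V → W)
    (hf : ∀ u v, G.Adj u v → H.Reachable (f u) (f v)) {u v : V} (h : G.Reachable u v) :
    H.Reachable (f u) (f v) := by
  obtain ⟨p⟩ := h
  induction p with
  | nil => exact .rfl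
  | cons huv _ ih => exact (hf _ _ huv).trans ih

theorem IsAcyclic.support_subset_of_induce_preconnected {T : SimpleGraph V} (hT : T.IsAcyclic)
    {S : Set V} (hS : (T.induce S).Preconnected) {a b : V} (ha : a ∈ S) (hb : b ∈ S)
    {p : T.Walk a b} (hp : p.IsPath) {x : V} (hx : x ∈ p.support) : x ∈ S := by
  obtain ⟨q, hq⟩ := (hS ⟨a, ha⟩ ⟨b, hb⟩).exists_isPath
  have hq' : (q.map (Embedding.induce S).toHom).IsPath :=
    hq.map (Embedding.induce (G := T) S).injective
  have hpq : p = q.map (Embedding.induce S).toHom :=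
    congrArg Subtype.val ((hT.subsingleton_path a b).elim ⟨p, hp⟩ ⟨_, hq'⟩)
  rw [hpq] at hx
  obtain ⟨y, -, rfl⟩ := List.mem_map.mp (Walk.support_map (Embedding.induce S).toHom q ▸ hx)
  exact y.2

theorem Walk.IsPath.append_of_inter {G : SimpleGraph V} {u v w : V} {p : G.Walk u v}
    {q : G.Walk v w} (hp : p.IsPath) (hq : q.IsPath)
    (h : ∀ x ∈ p.support, x ∈ q.support → x = v) : (p.append q).IsPath := by
  rw [Walk.isPath_def] at hp hq ⊢
  have hqs : q.support = v :: q.support.tail := q.cons_tail_support.symm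
  rw [hqs, List.nodup_cons] at hq
  rw [Walk.support_append, List.nodup_append']
  refine ⟨hp, hq.2, fun x hx hx' => hq.1 ?_⟩
  rwa [h x hx (List.mem_of_mem_tail hx')] at hx'

/-- A subtree `S` of a tree has a gate for every vertex `i`: a vertex of `S` that lies on every
walk from `i` to `S`. -/
theorem IsTree.exists_gate {T : SimpleGraph V} (hT : T.IsTree) {S : Set V}
    (hS : (T.induce S).Connected) (i : V) :
    ∃ j ∈ S, ∀ t ∈ S, ∀ p : T.Walk i t, j ∈ p.support := by
  classical
  have hne : ∃ n : ℕ, ∃ j ∈ S, ∃ p : T.Walk i j, p.length = n := by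
    obtain ⟨⟨s, hs⟩⟩ := hS.nonempty
    obtain ⟨p⟩ := hT.connected.preconnected i s
    exact ⟨_, s, hs, p, rfl⟩
  obtain ⟨j, hj, p, hp⟩ := Nat.find_spec hne
  have hmin : ∀ t ∈ S, ∀ q : T.Walk i t, p.length ≤ q.length := fun t ht q =>
    hp ▸ Nat.find_min' hne ⟨t, ht, q, rfl⟩
  refine ⟨j, hj, fun t ht q => ?_⟩
  obtain ⟨r, hr⟩ := (hT.connected.preconnected j t).exists_isPath
  have hinter : ∀ x ∈ p.bypass.support, x ∈ r.support → x = j := by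
    intro x hx hxr
    have hxp := p.support_bypass_subset_support hx
    by_contra hxj
    exact (Walk.length_takeUntil_lt_length hxp hxj).not_ge (hmin x
      (hT.isAcyclic.support_subset_of_induce_preconnected hS.preconnected hj ht hr hxr) _)
  have hpath := p.bypass_isPath.append_of_inter hr hinter
  have heq : q.bypass = p.bypass.append r :=
    congrArg Subtype.val ((hT.isAcyclic.subsingleton_path i t).elim ⟨_, q.bypass_isPath⟩ ⟨_, hpath⟩)
  apply q.support_bypass_subset_support
  rw [heq, Walk.mem_support_append_iff]
  exact .inl (Walk.end_mem_support _)

theorem IsAcyclic.eq_of_walk_avoiding {T : SimpleGraph V} (hT : T.IsAcyclic) {i m n : V}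
    (hm : T.Adj i m) (hn : T.Adj i n) (p : T.Walk m n) (hp : i ∉ p.support) : m = n := by
  classical
  have h1 : (Walk.cons hm p.bypass).IsPath :=
    p.bypass_isPath.cons fun h => hp (p.support_bypass_subset_support h)
  have h2 : (Walk.cons hn Walk.nil).IsPath := by simp [hn.ne]
  have h := congrArg (fun q : T.Path i n => q.1.snd) ((hT.subsingleton_path i n).elim ⟨_, h1⟩ ⟨_, h2⟩)
  simpa using h

/-- In a tree with a root `i`, every other vertex lies in the branch of a neighbour of `i`, and
adjacent vertices other than `i` lie in the same branch. -/
theorem IsTree.exists_branch {T : SimpleGraph V} (hT : T.IsTree) (i : V) :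
    ∃ n : V → V, (∀ j, j ≠ i → T.Adj i (n j)) ∧ (∀ j, T.Adj i j → n j = j) ∧
      ∀ j k, j ≠ i → k ≠ i → T.Adj j k → n j = n k := by
  classical
  have h : ∀ j, ∃ m, j ≠ i → T.Adj i m ∧ ∃ p : T.Walk m j, i ∉ p.support := by
    intro j
    by_cases hj : j = i
    · exact ⟨i, fun h => (h hj).elim⟩
    obtain ⟨p, hp⟩ := (hT.connected.preconnected i j).exists_isPath
    cases p with
    | nil => exact (hj rfl).elim
    | cons hadj p =>
      rw [Walk.cons_isPath_iff] at hp
      exact ⟨_, fun _ => ⟨hadj, p, hp.2⟩⟩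
  choose n hn using h
  refine ⟨n, fun j hj => (hn j hj).1, fun j hj => ?_, fun j k hj hk hjk => ?_⟩
  · obtain ⟨hadj, p, hp⟩ := hn j hj.ne'
    exact hT.isAcyclic.eq_of_walk_avoiding hadj hj p hp
  · obtain ⟨hadj, p, hp⟩ := hn j hj
    obtain ⟨hadj', q, hq⟩ := hn k hk
    refine hT.isAcyclic.eq_of_walk_avoiding hadj hadj' (p.append (.cons hjk q.reverse)) ?_
    simp [Walk.mem_support_append_iff, hp, hq, hj.symm]

section Glue

variable {ι : Type*} {κ : ι → Type*} (T : SimpleGraph ι) (F : ∀ i, SimpleGraph (κ i))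
  (a : ∀ i j, T.Adj i j → κ i)

/-- The graph on `Σ i, κ i` obtained from the disjoint union of the graphs `F i` by adding, for
every edge `ij` of `T`, an edge joining the vertex `a i j` of `F i` to the vertex `a j i` of
`F j`. -/
def glue : SimpleGraph (Σ i, κ i) where
  Adj p q := (∃ i x y, p = ⟨i, x⟩ ∧ q = ⟨i, y⟩ ∧ (F i).Adj x y) ∨
    ∃ i j, ∃ h : T.Adj i j, p = ⟨i, a i j h⟩ ∧ q = ⟨j, a j i h.symm⟩
  symm.symm p q := by
    rintro (⟨i, x, y, rfl, rfl, h⟩ | ⟨i, j, h, rfl, rfl⟩)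
    · exact .inl ⟨i, y, x, rfl, rfl, h.symm⟩
    · exact .inr ⟨j, i, h.symm, rfl, rfl⟩
  loopless.irrefl p := by
    rintro (⟨i, x, y, rfl, hxy, h⟩ | ⟨i, j, h, rfl, hij⟩)
    · obtain rfl : x = y := eq_of_heq (Sigma.mk.inj hxy).2
      exact h.ne rfl
    · exact h.ne (Sigma.mk.inj hij).1

variable {T F}

theorem glue_adj_of_adj {i : ι} {x y : κ i} (h : (F i).Adj x y) :
    (glue T F a).Adj ⟨i, x⟩ ⟨i, y⟩ :=
  .inl ⟨i, x, y, rfl, rfl, h⟩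

theorem glue_adj_link {i j : ι} (h : T.Adj i j) :
    (glue T F a).Adj ⟨i, a i j h⟩ ⟨j, a j i h.symm⟩ :=
  .inr ⟨i, j, h, rfl, rfl⟩

theorem glue_connected (hT : T.Connected) (hF : ∀ i, (F i).Connected) :
    (glue T F a).Connected := by
  have hfib : ∀ i x y, (glue T F a).Reachable ⟨i, x⟩ ⟨i, y⟩ := fun i x y =>
    ((hF i).preconnected x y).of_adj_imp_reachable (fun x => (⟨i, x⟩ : Σ i, κ i))
      fun x y h => (glue_adj_of_adj a h).reachable
  have hne : ∀ i, Nonempty (κ i) := fun i => (hF i).nonempty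
  have : Nonempty (Σ i, κ i) := ⟨⟨hT.nonempty.some, (hne _).some⟩⟩
  refine Connected.mk fun ⟨i, x⟩ ⟨j, y⟩ => ?_
  refine (hfib i x _).trans (((hT.preconnected i j).of_adj_imp_reachable
    (fun i => (⟨i, (hne i).some⟩ : Σ i, κ i)) fun i j h => ?_).trans (hfib j _ y))
  exact (hfib i _ (a i j h)).trans ((glue_adj_link a h).reachable.trans (hfib j _ _))

theorem glue_isAcyclic (hT : T.IsTree) (hF : ∀ i, (F i).IsAcyclic) :
    (glue T F a).IsAcyclic := by
  classical
  rw [isAcyclic_iff_forall_adj_isBridge]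
  rintro p q (⟨i, x, y, rfl, rfl, h⟩ | ⟨i, j, h, rfl, rfl⟩) hreach
  · refine isAcyclic_iff_forall_adj_isBridge.mp (hF i) h ?_
    obtain ⟨n, hn, hn', hnn⟩ := hT.exists_branch i
    let r : (Σ i, κ i) → κ i := fun p =>
      if hp : p.1 = i then hp ▸ p.2 else a i (n p.1) (hn _ hp)
    have hr : ∀ x, r ⟨i, x⟩ = x := fun x => by simp [r]
    have hr' : ∀ j (hj : T.Adj i j) z, r ⟨j, z⟩ = a i j hj := fun j hj z => by
      simp only [r, dif_neg hj.ne', hn' j hj]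
    have key := hreach.of_adj_imp_reachable (H := (F i).deleteEdges {s(x, y)}) r ?_
    · simpa only [hr] using key
    intro p q hpq
    rw [deleteEdges_adj] at hpq
    obtain ⟨⟨j, z, w, rfl, rfl, hzw⟩ | ⟨j, k, hjk, rfl, rfl⟩, hne⟩ := hpq
    · by_cases hj : j = i
      · subst hj
        rw [hr, hr]
        refine Adj.reachable (deleteEdges_adj.mpr ⟨hzw, fun he => hne ?_⟩)
        have he' : s(z, w) = s(x, y) := he
        have := congrArg (Sym2.map fun x => (⟨j, x⟩ : Σ i, κ i)) he'
        simpa using this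
      · have : r ⟨j, z⟩ = r ⟨j, w⟩ := by simp only [r, dif_neg hj]
        rw [this]
    · by_cases hj : j = i
      · subst hj
        rw [hr, hr' k hjk]
      by_cases hk : k = i
      · subst hk
        rw [hr, hr' j hjk.symm]
      have : ∀ z w, r ⟨j, z⟩ = r ⟨k, w⟩ := fun z w => by
        simp only [r, dif_neg hj, dif_neg hk, hnn j k hj hk hjk]
      rw [this]
  · refine isAcyclic_iff_forall_adj_isBridge.mp hT.isAcyclic h ?_
    refine hreach.of_adj_imp_reachable (H := T.deleteEdges {s(i, j)}) Sigma.fst ?_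
    intro p q hpq
    rw [deleteEdges_adj] at hpq
    obtain ⟨⟨k, z, w, rfl, rfl, hzw⟩ | ⟨k, l, hkl, rfl, rfl⟩, hne⟩ := hpq
    · exact .rfl
    · refine Adj.reachable (deleteEdges_adj.mpr ⟨hkl, fun he => hne ?_⟩)
      rw [Set.mem_singleton_iff, Sym2.eq_iff] at he
      obtain ⟨rfl, rfl⟩ | ⟨rfl, rfl⟩ := he
      · rfl
      · exact Sym2.eq_swap

theorem glue_isTree (hT : T.IsTree) (hF : ∀ i, (F i).IsTree) : (glue T F a).IsTree :=
  ⟨glue_connected a hT.connected fun i => (hF i).connected,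
    glue_isAcyclic a hT fun i => (hF i).isAcyclic⟩

theorem glue_induce_connected {S : Set (Σ i, κ i)} {I : Set ι} (hI : (T.induce I).Connected)
    (hSI : ∀ p ∈ S, p.1 ∈ I) (hS : ∀ i ∈ I, ((F i).induce {x | ⟨i, x⟩ ∈ S}).Connected)
    (ha : ∀ i ∈ I, ∀ j ∈ I, ∀ h : T.Adj i j, ⟨i, a i j h⟩ ∈ S) :
    ((glue T F a).induce S).Connected := by
  have hcon := glue_connected (T := T.induce I)
    (F := fun i : I => (F i).induce {x | (⟨i, x⟩ : Σ i, κ i) ∈ S})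
    (fun i j h => ⟨a i j h, ha i i.2 j j.2 h⟩) hI fun i => hS i i.2
  let f : (Σ i : I, {x : κ i | (⟨i, x⟩ : Σ i, κ i) ∈ S}) → S := fun p => ⟨⟨p.1, p.2⟩, p.2.2⟩
  have hf : ∀ p : S, ∃ q, f q = p := fun p => ⟨⟨⟨p.1.1, hSI p.1 p.2⟩, ⟨p.1.2, p.2⟩⟩, rfl⟩
  have : Nonempty S := hcon.nonempty.map f
  refine Connected.mk fun p q => ?_
  obtain ⟨p, rfl⟩ := hf p
  obtain ⟨q, rfl⟩ := hf q
  refine (hcon.preconnected p q).of_adj_imp_reachable f fun p q hpq => Adj.reachable ?_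
  obtain ⟨i, x, y, rfl, rfl, h⟩ | ⟨i, j, h, rfl, rfl⟩ := hpq
  · exact glue_adj_of_adj a h
  · exact glue_adj_link a h

end Glue

end SimpleGraph

namespace TreeDecomp

variable {V ι : Type} {G : SimpleGraph V}

/-- Every finite clique is contained in a bag of every tree-decomposition. -/
theorem exists_subset_bag (td : TreeDecomp G ι) {K : Set V} (hK : G.IsClique K)
    (hfin : K.Finite) : ∃ i, K ⊆ td.bag i := by
  classical
  induction K, hfin using Set.Finite.induction_on with
  | empty =>
    obtain ⟨i⟩ := td.isTree.connected.nonempty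
    exact ⟨i, Set.empty_subset _⟩
  | @insert v K hv _ ih =>
    obtain ⟨i, hi⟩ := ih (hK.subset (Set.subset_insert v K))
    obtain ⟨j, hj, hgate⟩ := td.isTree.exists_gate (td.bags_connected v) i
    refine ⟨j, Set.insert_subset hj fun u hu => ?_⟩
    have huv : G.Adj u v := hK (Set.mem_insert_of_mem v hu) (Set.mem_insert v K)
      fun h => hv (h ▸ hu)
    obtain ⟨t, htu, htv⟩ := td.edges_covered huv
    obtain ⟨p, hp⟩ := (td.isTree.connected.preconnected i t).exists_isPath
    exact td.isTree.isAcyclic.support_subset_of_induce_preconnected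
      (td.bags_connected u).preconnected (hi hu) htu hp (hgate t htv p)

/-- The restriction of a tree-decomposition to an induced subgraph. -/
noncomputable def induce (td : TreeDecomp G ι) (X : Set V) : TreeDecomp (G.induce X) ι where
  tree := td.tree
  isTree := td.isTree
  bag i := (td.bag i).preimage Subtype.val Subtype.val_injective.injOn
  bags_cover v := by simpa using td.bags_cover v
  edges_covered u v h := by simpa using td.edges_covered (u := u) (v := v) h
  bags_connected v := by
    have heq : {i | v ∈ (td.bag i).preimage Subtype.val Subtype.val_injective.injOn} =
        {i | (v : V) ∈ td.bag i} := Set.ext fun _ => Finset.mem_preimage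
    exact heq ▸ td.bags_connected v

theorem card_bag_induce_le (td : TreeDecomp G ι) (X : Set V) (i : ι) :
    ((td.induce X).bag i).card ≤ (td.bag i).card :=
  Finset.card_le_card_of_injOn Subtype.val (fun _ => (Finset.mem_preimage (hf :=
    Subtype.val_injective.injOn)).mp) Subtype.val_injective.injOn

/-- The tree-decomposition with a single bag. -/
def single [Fintype V] (G : SimpleGraph V) : TreeDecomp G Unit where
  tree := ⊥
  isTree := .of_subsingleton
  bag _ := Finset.univ
  bags_cover v := ⟨(), Finset.mem_univ v⟩
  edges_covered u v _ := ⟨(), Finset.mem_univ u, Finset.mem_univ v⟩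
  bags_connected v := by
    have : Nonempty {i : Unit | v ∈ (Finset.univ : Finset V)} := ⟨⟨(), Finset.mem_univ v⟩⟩
    exact SimpleGraph.Connected.of_subsingleton

/-- Tree-decompositions of the subgraphs induced by the bags of `td` can be glued along `td.tree`
when, for adjacent nodes `i` and `j`, the node `a i j` of the decomposition of bag `i` contains the
intersection of the bags `i` and `j`. -/
def glue (td : TreeDecomp G ι) {κ : ι → Type}
    (F : ∀ i, TreeDecomp (G.induce (td.bag i : Set V)) (κ i))
    (a : ∀ i j, td.tree.Adj i j → κ i)
    (ha : ∀ i j (h : td.tree.Adj i j) v (hv : v ∈ td.bag i), v ∈ td.bag j →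
      ⟨v, hv⟩ ∈ (F i).bag (a i j h)) : TreeDecomp G (Σ i, κ i) where
  tree := SimpleGraph.glue td.tree (fun i => (F i).tree) a
  isTree := SimpleGraph.glue_isTree a td.isTree fun i => (F i).isTree
  bag p := ((F p.1).bag p.2).map (Function.Embedding.subtype _)
  bags_cover v := by
    obtain ⟨i, hi⟩ := td.bags_cover v
    obtain ⟨x, hx⟩ := (F i).bags_cover ⟨v, hi⟩
    exact ⟨⟨i, x⟩, Finset.mem_map_of_mem _ hx⟩
  edges_covered u v h := by
    obtain ⟨i, hu, hv⟩ := td.edges_covered h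
    obtain ⟨x, hx, hx'⟩ := (F i).edges_covered (u := ⟨u, hu⟩) (v := ⟨v, hv⟩) h
    exact ⟨⟨i, x⟩, Finset.mem_map_of_mem _ hx, Finset.mem_map_of_mem _ hx'⟩
  bags_connected v := by
    have hmem : ∀ i x (hv : v ∈ td.bag i),
        v ∈ ((F i).bag x).map (Function.Embedding.subtype _) ↔ ⟨v, hv⟩ ∈ (F i).bag x := by
      intro i x hv
      exact Finset.mem_map' (Function.Embedding.subtype _) (a := ⟨v, hv⟩)
    refine SimpleGraph.glue_induce_connected a (td.bags_connected v) ?_ ?_ ?_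
    · rintro ⟨i, x⟩ hp
      obtain ⟨w, -, rfl⟩ := Finset.mem_map.mp hp
      exact w.2
    · intro i hi
      have heq : {x | v ∈ ((F i).bag x).map (Function.Embedding.subtype _)} =
          {x | ⟨v, hi⟩ ∈ (F i).bag x} := Set.ext fun x => hmem i x hi
      exact heq ▸ (F i).bags_connected ⟨v, hi⟩
    · intro i hi j hj h
      exact (hmem i _ hi).mpr (ha i j h v hi hj)

end TreeDecomp

theorem exists_treeDecomp_card_le_treewidth {V : Type} [Finite V] (G : SimpleGraph V) :
    ∃ (ι : Type) (td : TreeDecomp G ι), ∀ i, (td.bag i).card ≤ treewidth G + 1 := by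
  have := Fintype.ofFinite V
  exact Nat.sInf_mem (s := {k | ∃ (ι : Type) (td : TreeDecomp G ι), ∀ i, (td.bag i).card ≤ k + 1})
    ⟨Fintype.card V, Unit, .single G, fun _ => Nat.le_succ _⟩

theorem treewidth_le_of_treeDecomp {V ι : Type} {G : SimpleGraph V} (td : TreeDecomp G ι) {k : ℕ}
    (h : ∀ i, (td.bag i).card ≤ k + 1) : treewidth G ≤ k :=
  Nat.sInf_le ⟨ι, td, h⟩

theorem treewidth_induce_le {V : Type} [Finite V] (G : SimpleGraph V) (X : Set V) :
    treewidth (G.induce X) ≤ treewidth G := by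
  obtain ⟨ι, td, h⟩ := exists_treeDecomp_card_le_treewidth G
  exact treewidth_le_of_treeDecomp (td.induce X) fun i => (td.card_bag_induce_le X i).trans (h i)

theorem TreeDecomp.treewidth_le_of_isClique_inter {V ι : Type} [Finite V] {G : SimpleGraph V}
    (td : TreeDecomp G ι)
    (hadj : ∀ i j, td.tree.Adj i j → G.IsClique (↑(td.bag i) ∩ ↑(td.bag j) : Set V)) {k : ℕ}
    (hk : ∀ i, treewidth (G.induce (td.bag i : Set V)) ≤ k) : treewidth G ≤ k := by
  choose κ F hF using fun i => exists_treeDecomp_card_le_treewidth (G.induce (td.bag i : Set V))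
  have hex : ∀ i j, td.tree.Adj i j → ∃ x : κ i, ∀ v (hv : v ∈ td.bag i), v ∈ td.bag j →
      ⟨v, hv⟩ ∈ (F i).bag x := by
    intro i j h
    obtain ⟨x, hx⟩ := (F i).exists_subset_bag (K := {v | (v : V) ∈ td.bag j})
      (fun u hu v hv huv => hadj i j h ⟨u.2, hu⟩ ⟨v.2, hv⟩ fun he => huv (Subtype.ext he))
      (Set.toFinite _)
    exact ⟨x, fun v hv hv' => hx hv'⟩
  choose a ha using hex
  refine treewidth_le_of_treeDecomp (td.glue F a ha) fun p => ?_
  rw [show (td.glue F a ha).bag p = ((F p.1).bag p.2).map _ from rfl, Finset.card_map]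
  exact (hF p.1 p.2).trans (Nat.add_le_add_right (hk p.1) 1)

/-- if `td` is a clique-separator decomposition of `G`, then `tw(G)`
is the maximum of `tw(A)` over all atoms `A = G[X]`, `X` a bag of `td`. -/
theorem treewidth_cliqueSeparatorDecomposition {V ι : Type} [Fintype V]
    (G : SimpleGraph V) (td : TreeDecomp G ι)
    (hadj : ∀ i j : ι, td.tree.Adj i j →
      G.IsClique (↑(td.bag i) ∩ ↑(td.bag j) : Set V) ∧
      IsMinSep G (↑(td.bag i) ∩ ↑(td.bag j) : Set V))
    (hatom : ∀ i : ι, ¬ ∃ T : Set (↑(td.bag i : Set V)),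
      (G.induce ↑(td.bag i)).IsClique T ∧ IsSeparator (G.induce ↑(td.bag i)) T) :
    treewidth G = sSup {k : ℕ | ∃ i : ι, k = treewidth (G.induce ↑(td.bag i))} := by
  have hle : ∀ k ∈ {k : ℕ | ∃ i : ι, k = treewidth (G.induce ↑(td.bag i))}, k ≤ treewidth G := by
    rintro k ⟨i, rfl⟩
    exact treewidth_induce_le G _
  refine le_antisymm ?_ ?_
  · exact td.treewidth_le_of_isClique_inter (fun i j h => (hadj i j h).1)
      fun i => le_csSup ⟨_, hle⟩ ⟨i, rfl⟩
  · obtain ⟨i⟩ := td.isTree.connected.nonempty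
    exact csSup_le ⟨_, i, rfl⟩ hle
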